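/- Under the assumptions π(x) ≤ C_π η(x) (η the standard normal density on ℝ^d) and g the modified soft-plus g(ξ) = log(2^ξ+1)/log 2, the objective L_k(f) = E_π[ (1/2)(f(X_{<k},0) + ∫_0^{X_k} g(∂ₖ f(X_{<k},t)) dt)² − log g(∂ₖ f(X_{1:k})) ] is finite for every f ∈ H^{1,k}(ℝ^k). -/

import Mathlib

open MeasureTheory Set

/-- The modified soft-plus function `g(ξ) = log(2^ξ + 1) / log 2`. -/
noncomputable def softg (ξ : ℝ) : ℝ := Real.log ((2 : ℝ) ^ ξ + 1) / Real.log 2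

/-- The standard Gaussian density on `ℝ^d`. -/
noncomputable def gaussDensity (d : ℕ) (x : Fin d → ℝ) : ℝ :=
  (2 * Real.pi) ^ (-(d : ℝ) / 2) * Real.exp (-(∑ i, x i ^ 2) / 2)

/-- The rectified map `R_k(f)(x) = f(x_{<k},0) + ∫_0^{x_k} g(∂ₖ f(x_{<k},t)) dt`,
where `f'` denotes the partial derivative of `f` in the last coordinate. -/
noncomputable def rectifiedMap (k : ℕ) (f f' : (Fin (k + 1) → ℝ) → ℝ)
    (x : Fin (k + 1) → ℝ) : ℝ :=
  f (Function.update x (Fin.last k) 0) +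
    ∫ t in (0 : ℝ)..(x (Fin.last k)), softg (f' (Function.update x (Fin.last k) t))

lemma log_two_pos' : 0 < Real.log 2 := Real.log_pos (by norm_num)

lemma softg_pos (ξ : ℝ) : 0 < softg ξ := by
  have h : (0:ℝ) < 2 ^ ξ := Real.rpow_pos_of_pos (by norm_num) ξ
  exact div_pos (Real.log_pos (by linarith)) log_two_pos'

lemma softg_le (ξ : ℝ) : softg ξ ≤ 1 + |ξ| := by
  have h : (0:ℝ) < 2 ^ ξ := Real.rpow_pos_of_pos (by norm_num) ξ
  have h1 : (2:ℝ) ^ ξ ≤ 2 ^ |ξ| :=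
    Real.rpow_le_rpow_of_exponent_le (by norm_num) (le_abs_self ξ)
  have h2 : (1:ℝ) ≤ 2 ^ |ξ| := Real.one_le_rpow (by norm_num) (abs_nonneg ξ)
  have h3 : (2:ℝ) ^ (1 + |ξ|) = 2 * 2 ^ |ξ| := by
    rw [Real.rpow_add (by norm_num), Real.rpow_one]
  unfold softg
  rw [div_le_iff₀ log_two_pos', ← Real.log_rpow (by norm_num)]
  exact Real.log_le_log (by linarith) (by linarith)

lemma le_softg {ξ : ℝ} (hξ : ξ ≤ 0) : (2:ℝ) ^ ξ ≤ softg ξ := by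
  have h : (0:ℝ) < 2 ^ ξ := Real.rpow_pos_of_pos (by norm_num) ξ
  have h1 : (2:ℝ) ^ ξ ≤ 1 := Real.rpow_le_one_of_one_le_of_nonpos (by norm_num) hξ
  have h2 := rpow_one_add_le_one_add_mul_self (s := 1) (by norm_num) h.le h1
  unfold softg
  rw [le_div_iff₀ log_two_pos', ← Real.log_rpow (by norm_num)]
  refine Real.log_le_log (by positivity) ?_
  norm_num at h2
  linarith

lemma abs_log_softg_le (ξ : ℝ) : |Real.log (softg ξ)| ≤ |ξ| := by
  rw [abs_le]
  constructor
  · rcases le_total ξ 0 with h | h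
    · have h1 := Real.log_le_log (Real.rpow_pos_of_pos (by norm_num) ξ) (le_softg h)
      rw [Real.log_rpow (by norm_num)] at h1
      have h2 : Real.log 2 ≤ 1 := by linarith [Real.log_two_lt_d9]
      rw [abs_of_nonpos h]
      nlinarith
    · have h1 : (1:ℝ) ≤ softg ξ := by
        unfold softg
        rw [le_div_iff₀ log_two_pos', one_mul]
        apply Real.log_le_log (by norm_num)
        have := Real.one_le_rpow (x := 2) (by norm_num) h
        linarith
      have := Real.log_nonneg h1
      have := abs_nonneg ξ
      linarith
  · have := Real.log_le_sub_one_of_pos (softg_pos ξ)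
    have := softg_le ξ
    linarith

lemma measurable_softg : Measurable softg := by
  unfold softg
  exact ((Real.measurable_log.comp
    ((measurable_const.pow measurable_id).add_const 1))).div_const _

lemma abs_le_one_add_sq (a : ℝ) : |a| ≤ 1 + a ^ 2 := by
  rw [abs_le]; constructor <;> nlinarith [sq_nonneg (a - 1), sq_nonneg (a + 1)]

lemma integrableOn_of_sq {φ : ℝ → ℝ} (hm : Measurable φ)
    (h2 : Integrable (fun t => φ t ^ 2)) (s : ℝ) : IntegrableOn φ (uIoc 0 s) := by
  have hc : IntegrableOn (fun _ : ℝ => (1:ℝ)) (uIoc 0 s) := by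
    exact integrableOn_const (by rw [Real.volume_uIoc]; exact ENNReal.ofReal_ne_top)
  refine Integrable.mono' (hc.add h2.integrableOn) hm.aestronglyMeasurable ?_
  filter_upwards with t
  exact abs_le_one_add_sq _

lemma cs_uIoc {φ : ℝ → ℝ} (hm : Measurable φ)
    (h2 : Integrable (fun t => φ t ^ 2)) (s : ℝ) :
    (∫ t in uIoc 0 s, |φ t|) ^ 2 ≤ |s| * ∫ t, φ t ^ 2 := by
  have hφ := (integrableOn_of_sq hm h2 s).abs
  have hc (c : ℝ) : IntegrableOn (fun _ : ℝ => c) (uIoc 0 s) := by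
    exact integrableOn_const (by rw [Real.volume_uIoc]; exact ENNReal.ofReal_ne_top)
  have hq : ∫ t in uIoc 0 s, φ t ^ 2 ≤ ∫ t, φ t ^ 2 :=
    setIntegral_le_integral h2 (by filter_upwards with t; exact sq_nonneg _)
  have key : ∀ m : ℝ, 0 ≤ |s| * (m * m) + (-2 * ∫ t in uIoc 0 s, |φ t|) * m
      + ∫ t in uIoc 0 s, φ t ^ 2 := by
    intro m
    have h0 : 0 ≤ ∫ t in uIoc 0 s, (φ t ^ 2 - 2 * m * |φ t| + m * m) := by
      apply integral_nonneg
      intro t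
      have := sq_nonneg (|φ t| - m)
      have h := sq_abs (φ t)
      simp only [Pi.zero_apply]
      nlinarith
    have e : ∫ t in uIoc 0 s, (φ t ^ 2 - 2 * m * |φ t| + m * m) =
        (∫ t in uIoc 0 s, φ t ^ 2) - 2 * m * (∫ t in uIoc 0 s, |φ t|) + |s| * (m * m) := by
      have hs1 : IntegrableOn (fun t => φ t ^ 2 - 2 * m * |φ t|) (uIoc 0 s) :=
        h2.integrableOn.sub (hφ.const_mul _)
      rw [integral_add hs1 (hc _), integral_sub h2.integrableOn (hφ.const_mul _), integral_const_mul, setIntegral_const]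
      simp [Measure.real, Real.volume_uIoc]
    rw [e] at h0
    linarith
  have := discrim_le_zero key
  unfold discrim at this
  have h3 := mul_le_mul_of_nonneg_left hq (abs_nonneg s)
  nlinarith

lemma core_one_dim {φ φ' : ℝ → ℝ} (hd : ∀ t, HasDerivAt φ (φ' t) t) (hm' : Measurable φ')
    (h2 : Integrable (fun t => φ t ^ 2)) (h2' : Integrable (fun t => φ' t ^ 2)) (s : ℝ) :
    (φ 0 + ∫ t in (0:ℝ)..s, softg (φ' t)) ^ 2 ≤
      (1 + s ^ 2) * (6 * (∫ t, φ t ^ 2) + 9 * (∫ t, φ' t ^ 2) + 3) := by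
  have hA : 0 ≤ ∫ t, φ t ^ 2 := integral_nonneg fun t => sq_nonneg _
  have hB : 0 ≤ ∫ t, φ' t ^ 2 := integral_nonneg fun t => sq_nonneg _
  set A := ∫ t, φ t ^ 2
  set B := ∫ t, φ' t ^ 2
  have hpt : ∀ r ∈ Ioc (0:ℝ) 1, φ 0 ^ 2 ≤ 2 * φ r ^ 2 + 2 * B := by
    intro r hr
    have hii : IntervalIntegrable φ' volume 0 r :=
      intervalIntegrable_iff.2 (integrableOn_of_sq hm' h2' r)
    have h1 := intervalIntegral.integral_eq_sub_of_hasDerivAt (fun x _ => hd x) hii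
    have h3 := intervalIntegral.norm_integral_le_integral_norm_uIoc (f := φ') (a := 0) (b := r)
      (μ := volume)
    simp only [Real.norm_eq_abs] at h3
    rw [h1] at h3
    have h4 := cs_uIoc hm' h2' r
    have h5 : |r| ≤ 1 := by rw [abs_of_pos hr.1]; exact hr.2
    have h6 : (φ r - φ 0) ^ 2 ≤ B := by
      calc (φ r - φ 0) ^ 2 = |φ r - φ 0| ^ 2 := (sq_abs _).symm
        _ ≤ (∫ t in uIoc 0 r, |φ' t|) ^ 2 := by gcongr
        _ ≤ |r| * B := h4
        _ ≤ 1 * B := by gcongr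
        _ = B := one_mul _
    nlinarith [sq_nonneg (2 * φ r - φ 0)]
  have h0 : φ 0 ^ 2 ≤ 2 * A + 2 * B := by
    have hc (c : ℝ) : IntegrableOn (fun _ : ℝ => c) (Ioc (0:ℝ) 1) := by
      exact integrableOn_const (by simp)
    have hi : IntegrableOn (fun r => 2 * φ r ^ 2) (Ioc (0:ℝ) 1) :=
      (h2.const_mul 2).integrableOn
    have h1 := setIntegral_mono_on (hc (φ 0 ^ 2)) (hi.add (hc (2 * B))) measurableSet_Ioc hpt
    have e : ∫ r in Ioc (0:ℝ) 1, ((fun r => 2 * φ r ^ 2) + (fun _ => 2 * B) : ℝ → ℝ) r =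
        2 * (∫ r in Ioc (0:ℝ) 1, φ r ^ 2) + 2 * B := by
      simp only [Pi.add_apply]
      rw [integral_add hi (hc _), integral_const_mul, setIntegral_const]
      simp
    rw [e, setIntegral_const] at h1
    simp at h1
    have hq : ∫ t in Ioc (0:ℝ) 1, φ t ^ 2 ≤ A :=
      setIntegral_le_integral h2 (by filter_upwards with t; exact sq_nonneg _)
    linarith
  set I := ∫ t in (0:ℝ)..s, softg (φ' t)
  set J := ∫ t in uIoc 0 s, |φ' t|
  have hJ : J ^ 2 ≤ |s| * B := cs_uIoc hm' h2' s
  have hJ0 : 0 ≤ J := integral_nonneg fun t => abs_nonneg _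
  have hI : |I| ≤ |s| + J := by
    have h3 := intervalIntegral.norm_integral_le_integral_norm_uIoc (f := fun t => softg (φ' t))
      (a := 0) (b := s) (μ := volume)
    simp only [Real.norm_eq_abs] at h3
    refine h3.trans ?_
    have hc (c : ℝ) : IntegrableOn (fun _ : ℝ => c) (uIoc 0 s) := by
      exact integrableOn_const (by rw [Real.volume_uIoc]; exact ENNReal.ofReal_ne_top)
    have hφ := (integrableOn_of_sq hm' h2' s).abs
    have hle : ∀ t, |softg (φ' t)| ≤ 1 + |φ' t| := fun t => by
      rw [abs_of_pos (softg_pos _)]; exact softg_le _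
    calc ∫ t in uIoc 0 s, |softg (φ' t)| ≤ ∫ t in uIoc 0 s, (1 + |φ' t|) := by
          apply integral_mono_of_nonneg
          · filter_upwards with t; exact abs_nonneg _
          · exact (hc 1).add hφ
          · filter_upwards with t; exact hle t
      _ = |s| + J := by
          rw [integral_add (hc 1) hφ, setIntegral_const]
          simp [Measure.real, Real.volume_uIoc, J]
  have hI2 : I ^ 2 ≤ 2 * (s ^ 2 + J ^ 2) := by
    have : I ^ 2 ≤ (|s| + J) ^ 2 := by rw [← sq_abs I]; gcongr
    have := sq_abs s
    nlinarith [sq_nonneg (|s| - J)]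
  have hs : |s| * 2 ≤ 1 + s ^ 2 := by
    have := sq_abs s
    nlinarith [sq_nonneg (|s| - 1)]
  -- (a + I)^2 ≤ 3 a^2 + (3/2) I^2
  have hfin : (φ 0 + I) ^ 2 ≤ 3 * φ 0 ^ 2 + 3 / 2 * I ^ 2 := by
    nlinarith [sq_nonneg (2 * φ 0 - I)]
  have hsB : |s| * 2 * B ≤ (1 + s ^ 2) * B := by gcongr
  have p1 : 0 ≤ s ^ 2 * A := by positivity
  have p2 : 0 ≤ s ^ 2 * B := by positivity
  nlinarith

lemma meas_ins (k : ℕ) : Measurable (fun q : ℝ × (Fin k → ℝ) =>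
    ((Fin.last k).insertNth q.1 q.2 : Fin (k + 1) → ℝ)) :=
  (MeasurableEquiv.piFinSuccAbove (fun _ : Fin (k + 1) => ℝ) (Fin.last k)).symm.measurable

lemma integrable_ins_iff (k : ℕ) (h : (Fin (k + 1) → ℝ) → ℝ) :
    Integrable (fun q : ℝ × (Fin k → ℝ) =>
      h ((Fin.last k).insertNth q.1 q.2 : Fin (k + 1) → ℝ)) ↔ Integrable h :=
  ((volume_preserving_piFinSuccAbove (fun _ : Fin (k + 1) => ℝ) (Fin.last k)).symm
    ).integrable_comp_emb (MeasurableEquiv.measurableEmbedding _)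

lemma measurable_rectified (k : ℕ) {f f' : (Fin (k + 1) → ℝ) → ℝ}
    (hf : Measurable f) (hf' : Measurable f') : Measurable (rectifiedMap k f f') := by
  have hu : Measurable (fun q : (Fin (k + 1) → ℝ) × ℝ =>
      Function.update q.1 (Fin.last k) q.2) := by
    rw [measurable_pi_iff]
    intro i
    by_cases h : i = Fin.last k
    · subst h; simpa using measurable_snd
    · simp only [Function.update_of_ne h]
      exact (measurable_pi_apply i).comp measurable_fst
  have hF : Measurable (fun q : (Fin (k + 1) → ℝ) × ℝ =>
      softg (f' (Function.update q.1 (Fin.last k) q.2))) :=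
    measurable_softg.comp (hf'.comp hu)
  have hl : Measurable (fun q : (Fin (k + 1) → ℝ) × ℝ => q.1 (Fin.last k)) :=
    (measurable_pi_apply _).comp measurable_fst
  have hI1 : MeasurableSet {q : (Fin (k + 1) → ℝ) × ℝ | 0 < q.2 ∧ q.2 ≤ q.1 (Fin.last k)} :=
    (measurableSet_lt measurable_const measurable_snd).inter (measurableSet_le measurable_snd hl)
  have hI2 : MeasurableSet {q : (Fin (k + 1) → ℝ) × ℝ | q.1 (Fin.last k) < q.2 ∧ q.2 ≤ 0} :=
    (measurableSet_lt hl measurable_snd).inter (measurableSet_le measurable_snd measurable_const)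
  have m1 := (hF.indicator hI1).stronglyMeasurable.integral_prod_right'
    (ν := (volume : Measure ℝ)) |>.measurable
  have m2 := (hF.indicator hI2).stronglyMeasurable.integral_prod_right'
    (ν := (volume : Measure ℝ)) |>.measurable
  have hu0 : Measurable (fun x : Fin (k + 1) → ℝ => f (Function.update x (Fin.last k) 0)) :=
    hf.comp (hu.comp (measurable_id.prodMk measurable_const))
  convert hu0.add (m1.sub m2) using 1
  funext x
  simp only [rectifiedMap, Pi.add_apply, Pi.sub_apply, intervalIntegral]
  rw [← integral_indicator measurableSet_Ioc, ← integral_indicator measurableSet_Ioc]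
  rfl

/-- Unnormalised Gaussian. -/
noncomputable def gU (n : ℕ) (x : Fin n → ℝ) : ℝ := Real.exp (-(∑ i, x i ^ 2) / 2)

lemma gU_pos (n : ℕ) (x : Fin n → ℝ) : 0 < gU n x := Real.exp_pos _

lemma gU_le_one (n : ℕ) (x : Fin n → ℝ) : gU n x ≤ 1 := by
  unfold gU
  rw [Real.exp_le_one_iff]
  have : 0 ≤ ∑ i, x i ^ 2 := Finset.sum_nonneg fun i _ => sq_nonneg _
  linarith

lemma measurable_gU (n : ℕ) : Measurable (gU n) := by
  unfold gU; fun_prop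

lemma integrable_gU (n : ℕ) : Integrable (gU n) := by
  have h : Integrable (fun t : ℝ => Real.exp (-(1/2) * t ^ 2)) :=
    integrable_exp_neg_mul_sq (by norm_num)
  have := Integrable.fintype_prod (ι := Fin n) (f := fun _ (t : ℝ) => Real.exp (-(1/2) * t ^ 2))
    (μ := fun _ => (volume : Measure ℝ)) (fun _ => h)
  refine this.congr ?_
  filter_upwards with x
  rw [← Real.exp_sum, gU, ← Finset.mul_sum]
  congr 1; ring

lemma integrable_mul_gU {n : ℕ} {h : (Fin n → ℝ) → ℝ} (hh : Integrable h) :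
    Integrable (fun x => h x * gU n x) := by
  refine hh.mul_bdd (c := 1) (measurable_gU n).aestronglyMeasurable ?_
  filter_upwards with x
  rw [Real.norm_eq_abs, abs_of_pos (gU_pos n x)]; exact gU_le_one n x

lemma integrable_rect (k : ℕ) (f f' : (Fin (k + 1) → ℝ) → ℝ)
    (hf' : ∀ x : Fin (k + 1) → ℝ,
      HasDerivAt (fun t => f (Function.update x (Fin.last k) t)) (f' x) (x (Fin.last k)))
    (hfmeas : Measurable f) (hf'meas : Measurable f')
    (hfL2 : Integrable (fun x => f x ^ 2)) (hf'L2 : Integrable (fun x => f' x ^ 2)) :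
    Integrable (fun y => rectifiedMap k f f' y ^ 2 * gU (k + 1) y) := by
  rw [← integrable_ins_iff] at hfL2 hf'L2 ⊢
  have hA := hfL2.integral_prod_right
  have hB := hf'L2.integral_prod_right
  have hg1 : Integrable (fun s : ℝ => (1 + s ^ 2) * Real.exp (-s ^ 2 / 2)) := by
    have h1 : Integrable (fun t : ℝ => Real.exp (-(1/2) * t ^ 2)) :=
      integrable_exp_neg_mul_sq (by norm_num)
    have h2 := integrable_rpow_mul_exp_neg_mul_sq (b := 1/2) (by norm_num) (s := 2) (by norm_num)
    refine (h1.add h2).congr ?_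
    filter_upwards with s
    have e : -s ^ 2 / 2 = -(1/2) * s ^ 2 := by ring
    simp only [Pi.add_apply, e, Real.rpow_two]
    ring
  have hg2 := integrable_mul_gU ((hA.const_mul 6).add (hB.const_mul 9))
  have hg3 := hg2.add ((integrable_gU k).const_mul 3)
  refine Integrable.mono' (hg1.mul_prod hg3) ?_ ?_
  · exact ((((measurable_rectified k hfmeas hf'meas).pow_const 2).mul
      (measurable_gU (k + 1))).comp (meas_ins k)).aestronglyMeasurable
  · have hae : ∀ᵐ z : Fin k → ℝ,
        Integrable (fun s : ℝ => f ((Fin.last k).insertNth s z : Fin (k + 1) → ℝ) ^ 2) ∧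
        Integrable (fun s : ℝ => f' ((Fin.last k).insertNth s z : Fin (k + 1) → ℝ) ^ 2) := by
      filter_upwards [hfL2.prod_left_ae, hf'L2.prod_left_ae] with z h1 h2
      exact ⟨h1, h2⟩
    have hae' := (Measure.quasiMeasurePreserving_snd (μ := (volume : Measure ℝ))
      (ν := (volume : Measure (Fin k → ℝ)))).ae hae
    filter_upwards [hae'] with q hq
    obtain ⟨s, z⟩ := q
    obtain ⟨h1, h2⟩ := hq
    have hd : ∀ t, HasDerivAt (fun r => f ((Fin.last k).insertNth r z : Fin (k + 1) → ℝ))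
        (f' ((Fin.last k).insertNth t z : Fin (k + 1) → ℝ)) t := by
      intro t
      have := hf' ((Fin.last k).insertNth t z : Fin (k + 1) → ℝ)
      simpa only [Fin.update_insertNth, Fin.insertNth_apply_same] using this
    have hm : Measurable (fun t => f' ((Fin.last k).insertNth t z : Fin (k + 1) → ℝ)) :=
      hf'meas.comp ((meas_ins k).comp (measurable_id.prodMk measurable_const))
    have hc := core_one_dim hd hm h1 h2 s
    have hgU : gU (k + 1) ((Fin.last k).insertNth s z : Fin (k + 1) → ℝ) =
        Real.exp (-s ^ 2 / 2) * gU k z := by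
      unfold gU
      rw [Fin.sum_univ_succAbove _ (Fin.last k), ← Real.exp_add]
      simp only [Fin.insertNth_apply_same, Fin.insertNth_apply_succAbove]
      congr 1; ring
    have hR : rectifiedMap k f f' ((Fin.last k).insertNth s z : Fin (k + 1) → ℝ) =
        f ((Fin.last k).insertNth (0:ℝ) z : Fin (k + 1) → ℝ) + ∫ t in (0:ℝ)..s,
          softg (f' ((Fin.last k).insertNth t z : Fin (k + 1) → ℝ)) := by
      unfold rectifiedMap
      simp only [Fin.update_insertNth, Fin.insertNth_apply_same]
    simp only [hgU, hR]
    rw [Real.norm_eq_abs, abs_of_nonneg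
      (mul_nonneg (sq_nonneg _) (mul_pos (Real.exp_pos _) (gU_pos _ _)).le)]
    refine (mul_le_mul_of_nonneg_right hc (mul_pos (Real.exp_pos _) (gU_pos _ _)).le).trans
      (le_of_eq ?_)
    simp only [Pi.add_apply]
    ring

lemma integrable_split {n m : ℕ} {H : (Fin n → ℝ) → ℝ}
    (hH : Integrable (fun y => H y * gU n y)) :
    Integrable (fun x : Fin (n + m) → ℝ => H (fun i => x (Fin.castAdd m i)) * gU (n + m) x) := by
  have e1 := volume_measurePreserving_sumPiEquivProdPi_symm (fun _ : Fin n ⊕ Fin m => ℝ)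
  have e2 := volume_measurePreserving_piCongrLeft (fun _ : Fin (n + m) => ℝ) finSumFinEquiv
  have e := e2.comp e1
  rw [← e.integrable_comp_emb ((MeasurableEquiv.measurableEmbedding _).comp
    (MeasurableEquiv.measurableEmbedding _))]
  refine (hH.mul_prod (integrable_gU m)).congr ?_
  filter_upwards with q
  have hl : ∀ i, (((MeasurableEquiv.piCongrLeft (fun _ : Fin (n + m) => ℝ) finSumFinEquiv) ∘
      (MeasurableEquiv.sumPiEquivProdPi (fun _ : Fin n ⊕ Fin m => ℝ)).symm) q)
        (Fin.castAdd m i) = q.1 i := by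
    intro i
    rw [← finSumFinEquiv_apply_left, Function.comp_apply, MeasurableEquiv.coe_piCongrLeft,
      Equiv.piCongrLeft_apply_apply]
    rfl
  have hr : ∀ i, (((MeasurableEquiv.piCongrLeft (fun _ : Fin (n + m) => ℝ) finSumFinEquiv) ∘
      (MeasurableEquiv.sumPiEquivProdPi (fun _ : Fin n ⊕ Fin m => ℝ)).symm) q)
        (Fin.natAdd n i) = q.2 i := by
    intro i
    rw [← finSumFinEquiv_apply_right, Function.comp_apply, MeasurableEquiv.coe_piCongrLeft,
      Equiv.piCongrLeft_apply_apply]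
    rfl
  rw [Function.comp_apply]
  generalize ((MeasurableEquiv.piCongrLeft (fun _ : Fin (n + m) => ℝ) finSumFinEquiv) ∘
      (MeasurableEquiv.sumPiEquivProdPi (fun _ : Fin n ⊕ Fin m => ℝ)).symm) q = x at hl hr ⊢
  simp only [hl, mul_assoc]
  congr 1
  unfold gU
  rw [Fin.sum_univ_add, ← Real.exp_add]
  simp only [hl, hr]
  congr 1; ring

/-- If the target density `p` satisfies `p ≤ C_π η` with `η` the standard Gaussian
density on `ℝ^d` and `g` is the modified soft-plus, then the objective
`L_k(f) = E_π[(1/2) R_k(f)(X_{1:k})² − log g(∂ₖ f(X_{1:k}))]` is finite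
(the integrand is integrable) for every `f ∈ H^{1,k}`. -/
theorem objective_finite (d k : ℕ) (hkd : k + 1 ≤ d) (Cπ : ℝ)
    (p : (Fin d → ℝ) → ℝ) (hpmeas : Measurable p) (hp0 : ∀ x, 0 ≤ p x)
    (hp : ∀ x, p x ≤ Cπ * gaussDensity d x)
    (f f' : (Fin (k + 1) → ℝ) → ℝ)
    (hf' : ∀ x : Fin (k + 1) → ℝ,
      HasDerivAt (fun t => f (Function.update x (Fin.last k) t)) (f' x) (x (Fin.last k)))
    (hfmeas : Measurable f) (hf'meas : Measurable f')
    (hfL2 : Integrable (fun x => f x ^ 2)) (hf'L2 : Integrable (fun x => f' x ^ 2)) :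
    Integrable (fun x : Fin d → ℝ =>
      ((1 / 2) * rectifiedMap k f f' (fun i => x (Fin.castLE hkd i)) ^ 2 -
        Real.log (softg (f' (fun i => x (Fin.castLE hkd i))))) * p x) := by
  obtain ⟨m, rfl⟩ := Nat.exists_eq_add_of_le hkd
  have hcast : ∀ i, Fin.castLE hkd i = Fin.castAdd m i := fun i => rfl
  simp only [hcast]
  set H : (Fin (k + 1) → ℝ) → ℝ := fun y =>
    (1 / 2) * rectifiedMap k f f' y ^ 2 - Real.log (softg (f' y)) with hHdef
  have hHm : Measurable H :=
    (((measurable_rectified k hfmeas hf'meas).pow_const 2).const_mul _).sub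
      (Real.measurable_log.comp (measurable_softg.comp hf'meas))
  have h1 := (integrable_rect k f f' hf' hfmeas hf'meas hfL2 hf'L2).const_mul (1 / 2)
  have h2 : Integrable (fun y => Real.log (softg (f' y)) * gU (k + 1) y) := by
    refine Integrable.mono' ((integrable_gU (k + 1)).add (integrable_mul_gU hf'L2)) ?_ ?_
    · exact ((Real.measurable_log.comp (measurable_softg.comp hf'meas)).mul
        (measurable_gU (k + 1))).aestronglyMeasurable
    · filter_upwards with y
      rw [Real.norm_eq_abs, abs_mul, abs_of_pos (gU_pos _ y)]
      have hb := (abs_log_softg_le (f' y)).trans (abs_le_one_add_sq (f' y))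
      have := mul_le_mul_of_nonneg_right hb (gU_pos _ y).le
      simp only [Pi.add_apply]
      linarith
  have hH : Integrable (fun y => H y * gU (k + 1) y) := by
    refine (h1.sub h2).congr ?_
    filter_upwards with y
    simp only [hHdef, Pi.sub_apply]
    ring
  have hS := (integrable_split (m := m) hH).norm.const_mul
    (Cπ * (2 * Real.pi) ^ (-((k + 1 + m : ℕ) : ℝ) / 2))
  refine Integrable.mono' hS ?_ ?_
  · exact ((hHm.comp (measurable_pi_iff.2 fun i => measurable_pi_apply _)).mul
      hpmeas).aestronglyMeasurable
  · filter_upwards with x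
    have hx := hp x
    change ‖H (fun i => x (Fin.castAdd m i)) * p x‖ ≤ _
    rw [norm_mul, norm_mul, Real.norm_of_nonneg (hp0 x), Real.norm_of_nonneg (gU_pos _ x).le]
    refine (mul_le_mul_of_nonneg_left hx (norm_nonneg _)).trans (le_of_eq ?_)
    unfold gaussDensity gU
    ring
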